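/- Let v₁, v₂, v₃ ∈ ℝ² be affinely independent with barycentric coordinates λᵢ (λᵢ(vⱼ) = δᵢⱼ), let γⱼ(t) = ((1+t)/2) v_{j+1} + ((1-t)/2) v_{j+2} (indices modulo 3), and fix μ ≥ 1, σ > 0. Then for all i, j ∈ {1,2,3}: ∫_{-1}^{1} p_{σ,μ}(t) λᵢ(γⱼ(t))² k̃_{σ,μ}(t) dt = (‖p_{σ,μ}‖²_{2,σ,μ}/4)(1 - δᵢⱼ), where ‖p_{σ,μ}‖²_{2,σ,μ} = ∫_{-1}^{1} p_{σ,μ}(t)² k̃_{σ,μ}(t) dt. -/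

import Mathlib

open MeasureTheory

/-- Lower incomplete gamma function `γ(s,z) = ∫₀^z u^(s-1) e^(-u) du`. -/
noncomputable def lowGamma (s z : ℝ) : ℝ := ∫ u in (0:ℝ)..z, u ^ (s - 1) * Real.exp (-u)

/-- Modified lower incomplete gamma function `γ^mod(s,z) = γ(s,z)/z^s`. -/
noncomputable def gammaMod (s z : ℝ) : ℝ := lowGamma s z / z ^ s

/-- First family of densities `k̃_{σ,μ}` on `[-1,1]`. -/
noncomputable def kTilde (σ μ t : ℝ) : ℝ :=
  (μ / gammaMod ((4 * μ - 3) / (2 * μ)) (1 / (2 * σ ^ (2 * μ)))) *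
    (t ^ 2) ^ (2 * μ - 2) * Real.exp (-(1 / 2) * (t ^ 2 / σ ^ 2) ^ μ)

/-- Second moment `t_{2,σ,μ}` of `k̃_{σ,μ}`. -/
noncomputable def tMom2 (σ μ : ℝ) : ℝ := ∫ t in (-1:ℝ)..1, t ^ 2 * kTilde σ μ t

/-- The orthogonal quadratic polynomial `p_{σ,μ}(t) = t² - t_{2,σ,μ}`. -/
noncomputable def pPoly (σ μ t : ℝ) : ℝ := t ^ 2 - tMom2 σ μ

/-- Parametrization of the edge `s_j` of the triangle, opposite to the vertex `v j`
(indices taken cyclically in `Fin 3`). -/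
noncomputable def edgeParam (v : Fin 3 → ℝ × ℝ) (j : Fin 3) (t : ℝ) : ℝ × ℝ :=
  ((1 + t) / 2) • v (j + 1) + ((1 - t) / 2) • v (j + 2)

/-!
Against the even probability density `k̃`, the polynomial `p(t) = t² - t₂` is orthogonal to `1` by
the choice of `t₂` and to `t` by parity. The square of an affine function of slope `b` is `b² p(t)`
plus a combination of `1` and `t`, so its integral against `p k̃` is `b² ‖p‖²`. On the edge `γⱼ` the
slope of `λᵢ` is `(δ_{i,j+1} - δ_{i,j+2}) / 2`, whose square is `(1 - δᵢⱼ) / 4`.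

That `k̃` has total mass one is the substitution `u = z t^(2μ)`, `z = 1 / (2σ^(2μ))`, in the
incomplete gamma integral.
-/

section SymmetryAndSubstitution

variable {E : Type*} [NormedAddCommGroup E] [NormedSpace ℝ E]

theorem intervalIntegral_comp_rpow_of_pos (f : ℝ → E) {p c : ℝ} (hp : 0 < p) (hc : 0 ≤ c) :
    ∫ t in 0..c, (p * t ^ (p - 1)) • f (t ^ p) = ∫ u in 0..c ^ p, f u := by
  have truncate (g : ℝ → E) {d : ℝ} (hd : 0 ≤ d) :
      ∫ t in 0..d, g t = ∫ t in Set.Ioi 0, (Set.Iic d).indicator g t := by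
    rw [intervalIntegral.integral_of_le hd, setIntegral_indicator measurableSet_Iic,
      Set.Ioi_inter_Iic]
  rw [truncate _ hc, truncate _ (Real.rpow_nonneg hc p),
    ← integral_comp_rpow_Ioi_of_pos (g := (Set.Iic (c ^ p)).indicator f) hp]
  refine setIntegral_congr_fun measurableSet_Ioi fun t (ht : 0 < t) ↦ ?_
  simp only [Set.indicator_apply, Set.mem_Iic, Real.rpow_le_rpow_iff ht.le hc hp, smul_ite,
    smul_zero]

theorem intervalIntegral_comp_abs (f : ℝ → ℝ) {c : ℝ} (hc : 0 ≤ c) :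
    ∫ t in -c..c, f |t| = 2 * ∫ t in 0..c, f t := by
  have truncate : (Set.Icc (-c) c).indicator (fun t ↦ f |t|) =
      fun t ↦ (Set.Iic c).indicator f |t| := by
    ext t
    simp only [Set.indicator_apply, Set.mem_Icc, Set.mem_Iic, abs_le]
  rw [intervalIntegral.integral_of_le (by linarith), ← integral_Icc_eq_integral_Ioc,
    ← integral_indicator measurableSet_Icc, truncate, integral_comp_abs,
    setIntegral_indicator measurableSet_Iic, Set.Ioi_inter_Iic, intervalIntegral.integral_of_le hc]

theorem intervalIntegral_eq_zero_of_odd {f : ℝ → E} (hf : Function.Odd f) (c : ℝ) :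
    ∫ t in -c..c, f t = 0 := by
  have h := intervalIntegral.integral_comp_neg (a := -c) (b := c) f
  simp only [hf _, neg_neg, intervalIntegral.integral_neg] at h
  have : IsAddTorsionFree E := .of_isTorsionFree ℝ E
  exact self_eq_neg.mp h.symm

end SymmetryAndSubstitution

theorem integral_sq_sub_secondMoment_mul_affine_sq {w : ℝ → ℝ} {c m : ℝ} (hw : Function.Even w)
    (hmass : ∫ t in -c..c, w t = 1) (hm : ∫ t in -c..c, t ^ 2 * w t = m) (a b : ℝ) :
    ∫ t in -c..c, (t ^ 2 - m) * (a + b * t) ^ 2 * w t =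
      b ^ 2 * ∫ t in -c..c, (t ^ 2 - m) ^ 2 * w t := by
  have hwi : IntervalIntegrable w volume (-c) c :=
    intervalIntegral.intervalIntegrable_of_integral_ne_zero (hmass ▸ one_ne_zero)
  have integrable_mul {q : ℝ → ℝ} (hq : Continuous q) :
      IntervalIntegrable (fun t ↦ q t * w t) volume (-c) c :=
    hwi.continuousOn_mul hq.continuousOn
  have orthogonal_one : ∫ t in -c..c, (t ^ 2 - m) * w t = 0 := by
    simp only [sub_mul]
    rw [intervalIntegral.integral_sub (integrable_mul (by fun_prop)) (hwi.const_mul m),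
      intervalIntegral.integral_const_mul, hmass, hm, mul_one, sub_self]
  have orthogonal_id : ∫ t in -c..c, (t ^ 2 - m) * t * w t = 0 :=
    intervalIntegral_eq_zero_of_odd (fun t ↦ by rw [hw t]; ring) c
  have expand (t : ℝ) : (t ^ 2 - m) * (a + b * t) ^ 2 * w t =
      b ^ 2 * ((t ^ 2 - m) ^ 2 * w t) + (2 * a * b) * ((t ^ 2 - m) * t * w t) +
        (a ^ 2 + b ^ 2 * m) * ((t ^ 2 - m) * w t) := by
    ring
  have i₀ := (integrable_mul (q := fun t ↦ t ^ 2 - m) (by fun_prop)).const_mul (a ^ 2 + b ^ 2 * m)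
  have i₁ := (integrable_mul (q := fun t ↦ (t ^ 2 - m) * t) (by fun_prop)).const_mul (2 * a * b)
  have i₂ := (integrable_mul (q := fun t ↦ (t ^ 2 - m) ^ 2) (by fun_prop)).const_mul (b ^ 2)
  simp only [expand]
  rw [intervalIntegral.integral_add (i₂.add i₁) i₀, intervalIntegral.integral_add i₂ i₁]
  simp only [intervalIntegral.integral_const_mul, orthogonal_one, orthogonal_id, mul_zero, add_zero]

theorem gammaMod_eq_integral (s : ℝ) {z : ℝ} (hz : 0 < z) :
    gammaMod s z = ∫ x in (0 : ℝ)..1, x ^ (s - 1) * Real.exp (-(z * x)) := by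
  have scale := intervalIntegral.mul_integral_comp_mul_left (a := 0) (b := 1) (c := z)
    (f := fun u ↦ u ^ (s - 1) * Real.exp (-u))
  rw [mul_zero, mul_one] at scale
  rw [gammaMod, lowGamma, ← scale, div_eq_iff (by positivity), mul_comm _ (z ^ s),
    ← intervalIntegral.integral_const_mul, ← intervalIntegral.integral_const_mul]
  refine intervalIntegral.integral_congr fun x hx ↦ ?_
  have hx0 : 0 ≤ x := by
    rw [Set.uIcc_of_le zero_le_one] at hx
    exact hx.1
  simp only [Real.mul_rpow hz.le hx0, Real.rpow_sub_one hz.ne']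
  field_simp

theorem gammaMod_pos {s z : ℝ} (hs : 0 < s) (hz : 0 < z) : 0 < gammaMod s z := by
  rw [gammaMod_eq_integral s hz]
  refine intervalIntegral.intervalIntegral_pos_of_pos_on ?_ (fun x hx ↦ ?_) one_pos
  · exact (intervalIntegral.intervalIntegrable_rpow' (by linarith)).mul_continuousOn (by fun_prop)
  · have := hx.1
    positivity

theorem gammaMod_eq_integral_rpow (s : ℝ) {p z : ℝ} (hp : 0 < p) (hz : 0 < z) :
    gammaMod s z = p * ∫ t in (0 : ℝ)..1, t ^ (p * s - 1) * Real.exp (-(z * t ^ p)) := by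
  have subst := intervalIntegral_comp_rpow_of_pos
    (fun x ↦ x ^ (s - 1) * Real.exp (-(z * x))) hp zero_le_one
  rw [Real.one_rpow] at subst
  rw [gammaMod_eq_integral s hz, ← subst, ← intervalIntegral.integral_const_mul]
  refine intervalIntegral.integral_congr_uIoo fun t ht ↦ ?_
  have ht0 : 0 < t := by
    rw [Set.uIoo_of_le zero_le_one] at ht
    exact ht.1
  have exponent : t ^ (p - 1) * (t ^ p) ^ (s - 1) = t ^ (p * s - 1) := by
    rw [← Real.rpow_mul ht0.le, ← Real.rpow_add ht0]
    ring_nf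
  simp only [smul_eq_mul, ← exponent]
  ring

section Density

variable {σ μ : ℝ}

theorem kTilde_even : Function.Even (kTilde σ μ) := fun t ↦ by
  simp only [kTilde, neg_sq]

theorem kTilde_eq_abs_rpow (hσ : 0 ≤ σ) (t : ℝ) :
    kTilde σ μ t = μ / gammaMod ((4 * μ - 3) / (2 * μ)) (1 / (2 * σ ^ (2 * μ))) *
      (|t| ^ (4 * μ - 4) * Real.exp (-(1 / (2 * σ ^ (2 * μ)) * |t| ^ (2 * μ)))) := by
  have sq_rpow {x : ℝ} (hx : 0 ≤ x) (r : ℝ) : (x ^ 2) ^ r = x ^ (2 * r) :=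
    (Real.rpow_natCast_mul hx 2 r).symm
  rw [kTilde, Real.div_rpow (by positivity) (by positivity), ← sq_abs t, sq_rpow (abs_nonneg t),
    sq_rpow (abs_nonneg t), sq_rpow hσ]
  ring_nf

theorem integral_kTilde (hσ : 0 < σ) (hμ : 3 / 4 < μ) : ∫ t in -1..1, kTilde σ μ t = 1 := by
  set s := (4 * μ - 3) / (2 * μ) with hs
  set z := 1 / (2 * σ ^ (2 * μ)) with hz
  have hμ₀ : 0 < μ := by linarith
  have hz₀ : 0 < z := by positivity
  have hγ : gammaMod s z ≠ 0 :=
    (gammaMod_pos (div_pos (by linarith) (by linarith)) hz₀).ne'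
  have exponent : 2 * μ * s - 1 = 4 * μ - 4 := by
    rw [hs]
    field_simp
    ring
  have gamma_eq := gammaMod_eq_integral_rpow s (mul_pos two_pos hμ₀) hz₀
  rw [exponent] at gamma_eq
  calc
    ∫ t in -1..1, kTilde σ μ t
      = μ / gammaMod s z *
          (2 * ∫ t in (0 : ℝ)..1, t ^ (4 * μ - 4) * Real.exp (-(z * t ^ (2 * μ)))) := by
        simp only [kTilde_eq_abs_rpow hσ.le, ← hs, ← hz, intervalIntegral.integral_const_mul]
        rw [← intervalIntegral_comp_abs _ zero_le_one]
    _ = 2 * μ * (∫ t in (0 : ℝ)..1, t ^ (4 * μ - 4) * Real.exp (-(z * t ^ (2 * μ)))) /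
          gammaMod s z := by ring
    _ = 1 := by rw [← gamma_eq, div_self hγ]

end Density

theorem affineMap_edgeParam (A : (ℝ × ℝ) →ᵃ[ℝ] ℝ) (v : Fin 3 → ℝ × ℝ) (j : Fin 3) (t : ℝ) :
    A (edgeParam v j t) =
      (A (v (j + 1)) + A (v (j + 2))) / 2 + (A (v (j + 1)) - A (v (j + 2))) / 2 * t := by
  rw [edgeParam, Convex.combo_affine_apply (by ring), smul_eq_mul, smul_eq_mul]
  ring

theorem sq_kronecker_sub_kronecker (i j : Fin 3) :
    ((if i = j + 1 then (1 : ℝ) else 0) - if i = j + 2 then 1 else 0) ^ 2 =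
      1 - if i = j then 1 else 0 := by
  fin_cases i <;> fin_cases j <;> simp

theorem integral_pPoly_bary_sq_edge_general (v : Fin 3 → ℝ × ℝ) (A : (ℝ × ℝ) →ᵃ[ℝ] ℝ)
    {σ μ : ℝ} (hσ : 0 < σ) (hμ : 3 / 4 < μ) (j : Fin 3) :
    ∫ t in (-1 : ℝ)..1, pPoly σ μ t * A (edgeParam v j t) ^ 2 * kTilde σ μ t =
      (∫ t in (-1 : ℝ)..1, pPoly σ μ t ^ 2 * kTilde σ μ t) / 4 *
        (A (v (j + 1)) - A (v (j + 2))) ^ 2 := by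
  simp only [affineMap_edgeParam, pPoly]
  rw [integral_sq_sub_secondMoment_mul_affine_sq (m := tMom2 σ μ) kTilde_even
    (integral_kTilde hσ hμ) rfl]
  ring

/-- `∫_{-1}^{1} p_{σ,μ}(t) λᵢ(γⱼ(t))² k̃_{σ,μ}(t) dt = (‖p_{σ,μ}‖²_{2,σ,μ}/4)(1 - δᵢⱼ)`. -/
theorem integral_pPoly_bary_sq_edge (v : Fin 3 → ℝ × ℝ) (hv : AffineIndependent ℝ v)
    (lam : Fin 3 → ℝ × ℝ → ℝ)
    (hlam : ∀ i, ∃ A : (ℝ × ℝ) →ᵃ[ℝ] ℝ, ∀ x, lam i x = A x)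
    (hkr : ∀ i j, lam i (v j) = if i = j then (1:ℝ) else 0)
    (σ μ : ℝ) (hσ : 0 < σ) (hμ : 1 ≤ μ)
    (i j : Fin 3) :
    ∫ t in (-1:ℝ)..1, pPoly σ μ t * (lam i (edgeParam v j t)) ^ 2 * kTilde σ μ t
      = ((∫ t in (-1:ℝ)..1, (pPoly σ μ t) ^ 2 * kTilde σ μ t) / 4)
          * (1 - if i = j then (1:ℝ) else 0) := by
  obtain ⟨A, hA⟩ := hlam i
  have general := integral_pPoly_bary_sq_edge_general v A hσ (lt_of_lt_of_le (by norm_num) hμ) j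
  simpa only [← hA, hkr, sq_kronecker_sub_kronecker] using general
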